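/- Let T > 0, b > 0 and q ≥ 0, and define S : [0,T] → ℝ by S(t) = b·((b+q)·e^{b(T−t)} − (b−q)·e^{−b(T−t)}) / ((b+q)·e^{b(T−t)} + (b−q)·e^{−b(T−t)}). Then S(t) > 0 for every t ∈ [0,T), and S(T) = q. In particular, with b = √(pε) and q = pc for p ∈ (0,1], ε > 0, c ≥ 0, the function φ⁰ₜ = √p·((−ε − c√(pε))·e^{2√(pε)(T−t)} + ε − c√(pε)) / ((−√ε − c√p)·e^{2√(pε)(T−t)} − √ε + c√p) is nonnegative on [0,T] and strictly positive on [0,T). -/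

import Mathlib

open Real

/-!
Both claims are sign checks after regrouping by `b` and `q`. With `u = e^{b(T-t)}` and
`v = e^{-b(T-t)}`, the fraction in `S` has numerator `b (u - v) + q (u + v)` and denominator
`b (u + v) + q (u - v)`, both positive when `u > v > 0`. For `φ⁰`, put `s = √p`, `e = √ε` and
`E = e^{2√(pε)(T-t)}`; since `√(pε) = s e`, the two minus signs cancel and
`φ⁰ = s e (e (E - 1) + c s (E + 1)) / (e (E + 1) + c s (E - 1))`,
which is nonnegative for `E ≥ 1` and positive for `E > 1`.
-/

/-- The explicit Riccati solution `S` is strictly positive on `[0,T)` and satisfies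
`S(T) = q`; in particular the diagonal equilibrium coefficient `φ⁰` of the
directed-chain game (corresponding to `b = √(pε)`, `q = pc`) is nonnegative on
`[0,T]` and strictly positive on `[0,T)`. -/
theorem stmt_2 (T b q p ε c : ℝ) (hT : 0 < T) (hb : 0 < b) (hq : 0 ≤ q)
    (hp : p ∈ Set.Ioc (0:ℝ) 1) (hε : 0 < ε) (hc : 0 ≤ c)
    (S φ0 : ℝ → ℝ)
    (hS : ∀ t, S t = b * ((b + q) * exp (b * (T - t)) - (b - q) * exp (-(b * (T - t)))) /
      ((b + q) * exp (b * (T - t)) + (b - q) * exp (-(b * (T - t)))))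
    (hφ0 : ∀ t, φ0 t = Real.sqrt p *
      ((-ε - c * Real.sqrt (p * ε)) * exp (2 * Real.sqrt (p * ε) * (T - t))
        + ε - c * Real.sqrt (p * ε)) /
      ((-Real.sqrt ε - c * Real.sqrt p) * exp (2 * Real.sqrt (p * ε) * (T - t))
        - Real.sqrt ε + c * Real.sqrt p)) :
    (∀ t ∈ Set.Ico (0:ℝ) T, 0 < S t) ∧ S T = q ∧
    (∀ t ∈ Set.Icc (0:ℝ) T, 0 ≤ φ0 t) ∧ (∀ t ∈ Set.Ico (0:ℝ) T, 0 < φ0 t) := by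
  obtain ⟨hp0, -⟩ := hp
  have hs : 0 < √p := Real.sqrt_pos.2 hp0
  have he : 0 < √ε := Real.sqrt_pos.2 hε
  have hse : √(p * ε) = √p * √ε := Real.sqrt_mul hp0.le ε
  have hcs : 0 ≤ c * √p := mul_nonneg hc hs.le
  have hφ : ∀ t, φ0 t = √p * (√ε * (√ε * (exp (2 * √(p * ε) * (T - t)) - 1)
      + c * √p * (exp (2 * √(p * ε) * (T - t)) + 1))) /
      (√ε * (exp (2 * √(p * ε) * (T - t)) + 1)
        + c * √p * (exp (2 * √(p * ε) * (T - t)) - 1)) := by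
    intro t
    rw [hφ0 t, ← neg_div_neg_eq]
    generalize exp (2 * √(p * ε) * (T - t)) = E
    rw [hse]
    congr 1
    · linear_combination (√p * (1 - E)) * Real.sq_sqrt hε.le
    · ring
  have hpos : ∀ t ∈ Set.Ico (0:ℝ) T, 0 < φ0 t := by
    intro t ht
    have hE : 1 < exp (2 * √(p * ε) * (T - t)) := by
      rw [Real.one_lt_exp_iff, hse]
      have := sub_pos.2 ht.2
      positivity
    rw [hφ t]
    generalize exp (2 * √(p * ε) * (T - t)) = E at hE ⊢
    have hE' := sub_pos.2 hE
    have hE0 : 0 < E := by linarith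
    positivity
  refine ⟨?_, ?_, ?_, hpos⟩
  · intro t ht
    have hlt : exp (-(b * (T - t))) < exp (b * (T - t)) := by
      have := mul_pos hb (sub_pos.2 ht.2)
      exact Real.exp_lt_exp.2 (by linarith)
    have hu := exp_pos (b * (T - t))
    have hv := exp_pos (-(b * (T - t)))
    rw [hS t]
    generalize exp (b * (T - t)) = u at *
    generalize exp (-(b * (T - t))) = v at *
    have huv := sub_pos.2 hlt
    have hnum : 0 < b * (u - v) + q * (u + v) := by positivity
    have hden : 0 < b * (u + v) + q * (u - v) := by positivity
    exact div_pos (mul_pos hb (by linarith)) (by linarith)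
  · rw [hS T]
    simp only [sub_self, mul_zero, neg_zero, exp_zero]
    have hden : (b + q) * 1 + (b - q) * 1 ≠ 0 := by
      have h2 : (b + q) * 1 + (b - q) * 1 = 2 * b := by ring
      rw [h2]
      positivity
    rw [div_eq_iff hden]
    ring
  · intro t ht
    rcases ht.2.lt_or_eq with h | rfl
    · exact (hpos t ⟨ht.1, h⟩).le
    · rw [hφ t]
      simp only [sub_self, mul_zero, exp_zero]
      positivity
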